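/- arXiv:1706.01579 — 4 statements merged into one kernel-verified Lean document; each statement's English description precedes it below -/
import Mathlib

section
/- There exists a ladder S ⊆ ℤ⁺ such that for every nonconstant polynomial P with integer coefficients for which P(ℤ) ∩ ℤ⁺ is infinite, S does not contain all of P(ℤ) ∩ ℤ⁺ (i.e., some positive value of P lies outside S). -/
/-- A set `S ⊆ ℤ⁺` is a *ladder* if for every `k ≥ 1`, every coloring `χ : ℤ → Fin k`,
and every length `L`, there is a monochromatic arithmetic progression of length `L`
with common difference in `S`. -/
def IsLadder (S : Set ℤ) : Prop :=
  ∀ k : ℕ, 1 ≤ k → ∀ χ : ℤ → Fin k, ∀ L : ℕ,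
    ∃ a : ℤ, ∃ d ∈ S, ∀ i : ℕ, i < L → χ (a + (i : ℤ) * d) = χ a

/-!
The ladder is the union over `n` of the blocks `n!², 2·n!², …, n·n!²`. The Hales–Jewett theorem
gives van der Waerden's theorem with a bound on the multiplier of the common difference that does
not depend on the coloring, so after rescaling each sufficiently long block alone serves a given
number of colors and a given length. On the other hand, the gap between the `n`-th block and the
next has endpoints in ratio greater than `n`, whereas consecutive values of a polynomial that tends
to infinity have ratio tending to `1`: such a polynomial takes values in every late enough gap. If
`P` has infinitely many positive values, then `P(x)` or `P(-x)` tends to infinity with `x`.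
-/

open Filter Polynomial
open scoped Nat

universe u

lemma exists_sum_line_eq_card_nsmul_add {α ι M : Type*} [Fintype ι] [AddCommMonoid M]
    (l : Combinatorics.Line α ι) (f : α → M) :
    ∃ a : ℕ, 0 < a ∧ a ≤ Fintype.card ι ∧ ∃ b : M, ∀ x, ∑ i, f (l x i) = a • f x + b := by
  classical
  obtain ⟨i₀, hi₀⟩ := l.proper
  refine ⟨Finset.card {i | l.idxFun i = none}, Finset.card_pos.2 ⟨i₀, by simp [hi₀]⟩,
    Finset.card_le_univ _, ∑ i, (l.idxFun i).elim 0 f, fun x => ?_⟩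
  rw [← Finset.sum_const, Finset.sum_filter, ← Finset.sum_add_distrib]
  refine Finset.sum_congr rfl fun i _ => ?_
  cases h : l.idxFun i <;> simp [h]

theorem exists_bound_mono_homothetic_copy (α κ : Type*) [Finite α] [Finite κ] :
    ∃ N : ℕ, ∀ {M : Type u} [AddCommMonoid M] (f : α → M) (C : M → κ),
      ∃ a : ℕ, 0 < a ∧ a ≤ N ∧ ∃ (b : M) (c : κ), ∀ x, C (a • f x + b) = c := by
  obtain ⟨ι, _, hι⟩ := Combinatorics.Line.exists_mono_in_high_dimension α κ
  refine ⟨Fintype.card ι, fun f C => ?_⟩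
  obtain ⟨l, c, hl⟩ := hι fun v => C (∑ i, f (v i))
  obtain ⟨a, ha, haι, b, hab⟩ := exists_sum_line_eq_card_nsmul_add l f
  exact ⟨a, ha, haι, b, c, fun x => hab x ▸ hl x⟩

theorem isLadder_of_forall_exists_multiples_mem {S : Set ℤ}
    (hS : ∀ n : ℕ, ∃ d : ℤ, ∀ j : ℕ, 0 < j → j ≤ n → j * d ∈ S) : IsLadder S := by
  intro k _ χ L
  obtain ⟨N, hN⟩ := exists_bound_mono_homothetic_copy (Fin (L + 1)) (Fin k)
  obtain ⟨d, hd⟩ := hS N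
  obtain ⟨j, hj, hjN, a, c, hc⟩ := hN (fun i => (i : ℤ) * d) χ
  have hcolor (i : ℕ) (hi : i < L + 1) : χ (a + i * (j * d)) = c := by
    rw [← hc ⟨i, hi⟩, nsmul_eq_mul]
    congr 1
    ring
  refine ⟨a, j * d, hd j hj hjN, fun i hi => ?_⟩
  rw [hcolor i (by omega), ← hcolor 0 (by omega)]
  simp

/-- The union over `n` of the blocks `{n!², 2 * n!², …, n * n!²}`. Squaring the factorials makes the
ratios of the endpoints of the gaps between consecutive blocks unbounded. -/
def factorialSqLadder : Set ℤ :=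
  {x | ∃ n j : ℕ, 0 < j ∧ j ≤ n ∧ x = j * (n ! : ℤ) ^ 2}

lemma pos_of_mem_factorialSqLadder {x : ℤ} (hx : x ∈ factorialSqLadder) : 0 < x := by
  obtain ⟨n, j, hj, -, rfl⟩ := hx
  positivity

lemma isLadder_factorialSqLadder : IsLadder factorialSqLadder :=
  isLadder_of_forall_exists_multiples_mem fun n => ⟨(n ! : ℤ) ^ 2, fun j hj hjn =>
    ⟨n, j, hj, hjn, rfl⟩⟩

lemma notMem_factorialSqLadder_of_lt_of_lt {n : ℕ} {x : ℤ} (hlo : n * (n ! : ℤ) ^ 2 < x)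
    (hhi : x < ((n + 1)! : ℤ) ^ 2) : x ∉ factorialSqLadder := by
  rintro ⟨k, j, hj, hjk, rfl⟩
  rcases le_or_gt k n with hkn | hnk
  · refine hlo.not_ge ?_
    gcongr
    exact hjk.trans hkn
  · refine hhi.not_ge ?_
    calc ((n + 1)! : ℤ) ^ 2 ≤ (k ! : ℤ) ^ 2 := by gcongr; exact hnk
      _ ≤ j * (k ! : ℤ) ^ 2 := le_mul_of_one_le_left (by positivity) (by exact_mod_cast hj)

lemma exists_lt_and_le_of_succ_le {α : Type*} [LinearOrder α] {u : ℕ → α} {g : α → α}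
    (hg : Monotone g) {N : ℕ} (hu : ∀ n ≥ N, u (n + 1) ≤ g (u n)) {a : α} (hN : u N ≤ a)
    (ha : ∃ n ≥ N, a < u n) : ∃ n ≥ N, a < u n ∧ u n ≤ g a := by
  by_contra! hskip
  have hle : ∀ n ≥ N, u n ≤ a := fun n hn => by
    induction n, hn using Nat.le_induction with
    | base => exact hN
    | succ n hn ih =>
      by_contra! hlt
      exact (hskip (n + 1) (by omega) hlt).not_ge ((hu n hn).trans (hg ih))
  obtain ⟨n, hn, hlt⟩ := ha
  exact hlt.not_ge (hle n hn)

theorem frequently_notMem_factorialSqLadder {u : ℕ → ℤ} {K : ℕ} (hu : Tendsto u atTop atTop)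
    (hK : ∀ᶠ n in atTop, u (n + 1) ≤ K * u n) : ∃ᶠ n in atTop, u n ∉ factorialSqLadder := by
  refine frequently_atTop.2 fun N₀ => ?_
  obtain ⟨N, hN⟩ := eventually_atTop.1 (hK.and (eventually_ge_atTop N₀))
  set m := max K (u N).toNat
  have hmN : u N ≤ m * (m ! : ℤ) ^ 2 :=
    calc u N ≤ m := by omega
      _ ≤ m * (m ! : ℤ) ^ 2 := le_mul_of_one_le_right (by positivity) <|
        one_le_pow₀ (by exact_mod_cast m.factorial_pos)
  have hcross : ∃ n ≥ N, m * (m ! : ℤ) ^ 2 < u n :=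
    ((eventually_ge_atTop N).and (hu.eventually_gt_atTop _)).exists
  obtain ⟨n, hn, hlo, hhi⟩ := exists_lt_and_le_of_succ_le
    (monotone_mul_left_of_nonneg (Int.natCast_nonneg K)) (fun n hn => (hN n hn).1) hmN hcross
  refine ⟨n, (hN n hn).2, notMem_factorialSqLadder_of_lt_of_lt hlo ?_⟩
  calc u n ≤ K * (m * (m ! : ℤ) ^ 2) := hhi
    _ ≤ m * (m * (m ! : ℤ) ^ 2) := by gcongr; exact le_max_left _ _
    _ = m ^ 2 * (m ! : ℤ) ^ 2 := by ring
    _ < (m + 1) ^ 2 * (m ! : ℤ) ^ 2 := by gcongr; omega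
    _ = ((m + 1)! : ℤ) ^ 2 := by rw [Nat.factorial_succ]; push_cast; ring

lemma tendsto_eval_int_atTop {P : ℤ[X]} (hdeg : 0 < P.degree) (hlead : 0 ≤ P.leadingCoeff) :
    Tendsto (fun x : ℤ => P.eval x) atTop atTop := by
  have hinj : Function.Injective (Int.castRingHom ℝ) := Int.cast_injective
  have hreal := (P.map (Int.castRingHom ℝ)).tendsto_atTop_of_leadingCoeff_nonneg
    (by rwa [degree_map_eq_of_injective hinj])
    (by rw [leadingCoeff_map_of_injective hinj]; simpa using hlead)
  rw [← tendsto_intCast_atTop_iff (R := ℝ)]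
  simpa [Function.comp_def] using hreal.comp tendsto_intCast_atTop_atTop

lemma leadingCoeff_nonneg_of_frequently_eval_pos {P : ℤ[X]} (hdeg : 0 < P.degree)
    (hpos : ∃ᶠ x : ℤ in atTop, 0 < P.eval x) : 0 ≤ P.leadingCoeff := by
  by_contra! hlead
  have hneg : Tendsto (fun x : ℤ => (-P).eval x) atTop atTop :=
    tendsto_eval_int_atTop (by rwa [degree_neg]) (by rw [leadingCoeff_neg]; omega)
  refine hpos ((hneg.eventually_ge_atTop 0).mono fun x hx => ?_)
  rw [eval_neg] at hx
  omega

lemma eventually_eval_add_le_two_mul_eval {P : ℤ[X]} (hdeg : 0 < P.degree)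
    (hlead : 0 ≤ P.leadingCoeff) (c : ℤ) :
    ∀ᶠ x : ℤ in atTop, P.eval (x + c) ≤ 2 * P.eval x := by
  have hlt : (taylor c P - P).degree < P.degree := by
    rw [← degree_taylor P c]
    refine degree_sub_lt_left (degree_taylor P c) ?_ (leadingCoeff_taylor ..)
    rw [Ne, taylor_eq_zero]
    exact ne_zero_of_degree_gt hdeg
  -- The polynomial `2 * P(x) - P(x + c)` has the same leading term as `P`.
  have htop : Tendsto (fun x : ℤ => (P - (taylor c P - P)).eval x) atTop atTop :=
    tendsto_eval_int_atTop (by rwa [degree_sub_eq_left_of_degree_lt hlt])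
      (by rwa [leadingCoeff_sub_of_degree_lt hlt])
  refine (htop.eventually_ge_atTop 0).mono fun x hx => ?_
  simp only [eval_sub, taylor_eval] at hx
  omega

theorem exists_eval_pos_notMem_factorialSqLadder {P : ℤ[X]} (hdeg : 0 < P.degree)
    (hpos : ∃ᶠ x : ℤ in atTop, 0 < P.eval x) :
    ∃ x : ℤ, 0 < P.eval x ∧ P.eval x ∉ factorialSqLadder := by
  have hlead := leadingCoeff_nonneg_of_frequently_eval_pos hdeg hpos
  have hcast : Tendsto (fun n : ℕ => (n : ℤ)) atTop atTop := tendsto_natCast_atTop_atTop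
  have hu : Tendsto (fun n : ℕ => P.eval (n : ℤ)) atTop atTop :=
    (tendsto_eval_int_atTop hdeg hlead).comp hcast
  have hgrowth : ∀ᶠ n : ℕ in atTop, P.eval ((n + 1 : ℕ) : ℤ) ≤ (2 : ℕ) * P.eval (n : ℤ) := by
    exact_mod_cast hcast.eventually (eventually_eval_add_le_two_mul_eval hdeg hlead 1)
  obtain ⟨n, hn, hn_pos⟩ := ((frequently_notMem_factorialSqLadder hu hgrowth).and_eventually
    (hu.eventually_gt_atTop 0)).exists
  exact ⟨n, hn_pos, hn⟩

/-- There is a ladder `S ⊆ ℤ⁺` which, for every nonconstant integer polynomial `P`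
whose set of positive values is infinite, omits some positive value of `P`. -/
theorem exists_ladder_omitting_polynomial_values :
    ∃ S : Set ℤ, S ⊆ {x : ℤ | 0 < x} ∧ IsLadder S ∧
      ∀ P : Polynomial ℤ, 0 < P.natDegree →
        {y : ℤ | 0 < y ∧ ∃ x : ℤ, P.eval x = y}.Infinite →
        ∃ y : ℤ, 0 < y ∧ (∃ x : ℤ, P.eval x = y) ∧ y ∉ S := by
  refine ⟨factorialSqLadder, fun _ => pos_of_mem_factorialSqLadder, isLadder_factorialSqLadder,
    fun P hdeg hinf => ?_⟩
  suffices ∃ x, 0 < P.eval x ∧ P.eval x ∉ factorialSqLadder from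
    let ⟨x, hpos, hmem⟩ := this; ⟨P.eval x, hpos, ⟨x, rfl⟩, hmem⟩
  have hfreq : ∃ᶠ x in atBot ⊔ atTop, 0 < P.eval x := by
    rw [← Int.cofinite_eq, frequently_cofinite_iff_infinite]
    refine Set.Infinite.of_image (P.eval ·) (hinf.mono ?_)
    rintro _ ⟨hpos, x, rfl⟩
    exact ⟨x, hpos, rfl⟩
  rcases frequently_sup.1 hfreq with hbot | htop
  · have hdeg' : 0 < (P.comp (-X)).natDegree := by simpa [natDegree_comp] using hdeg
    have hpos : ∃ᶠ x in atTop, 0 < (P.comp (-X)).eval x := by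
      simpa using tendsto_neg_atBot_atTop.frequently (by simpa using hbot)
    obtain ⟨x, hx⟩ := exists_eval_pos_notMem_factorialSqLadder
      (natDegree_pos_iff_degree_pos.1 hdeg') hpos
    exact ⟨-x, by simpa using hx⟩
  · exact exists_eval_pos_notMem_factorialSqLadder (natDegree_pos_iff_degree_pos.1 hdeg) htop
end

section
/- Any set S ⊆ ℤ⁺ with upper density 1 is a ladder. -/
/-- `S` has upper density one: `limsup_{n→∞} |S ∩ {1,…,n}| / n = 1`. -/
def HasUpperDensityOne (S : Set ℤ) : Prop :=
  Filter.atTop.limsup (fun n : ℕ => ((S ∩ Set.Icc (1 : ℤ) (n : ℤ)).ncard : ℝ) / n) = 1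

/-!
By the Hales–Jewett theorem there is an `N`, depending only on the number of colors and on `L`,
such that every coloring of `ℕ` has a monochromatic progression of length `L` whose common
difference is at most `N`. Each element of `{1, …, n} \ S` is a multiple `j * x` with
`1 ≤ j ≤ N` for at most `N` values of `x`, so if `S` has upper density close enough to `1`, some
`x ≤ n / N` satisfies `x, 2x, …, Nx ∈ S`. The bounded-difference theorem applied to
`m ↦ χ (m * x)` then gives a progression whose difference is one of these multiples.
-/

open Filter Finset Combinatorics

lemma sum_line_apply {ι α β : Type*} [Fintype ι] [AddCommMonoid β] (f : α → β)
    (l : Line α ι) (x : α) :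
    ∑ i, f (l x i) = #{i | l.idxFun i = none} • f x + ∑ i, (l.idxFun i).elim 0 f := by
  rw [← sum_const, sum_filter, ← sum_add_distrib]
  refine sum_congr rfl fun i _ => ?_
  rw [Line.apply_def]
  cases hi : l.idxFun i <;> simp [hi]

theorem exists_bound_mono_homothetic_copy_s9 {α : Type*} [AddCommMonoid α] (s : Finset α)
    (κ : Type*) [Finite κ] :
    ∃ N > 0, ∀ χ : α → κ, ∃ d ∈ Icc 1 N, ∃ (b : α) (c : κ), ∀ x ∈ s, χ (d • x + b) = c := by
  obtain ⟨ι, _, hι⟩ := Line.exists_mono_in_high_dimension s κ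
  refine ⟨Fintype.card ι + 1, Nat.succ_pos _, fun χ => ?_⟩
  obtain ⟨l, c, hc⟩ := hι fun v => χ (∑ i, (v i : α))
  have active_pos : 0 < #{i | l.idxFun i = none} :=
    card_pos.2 <| l.proper.imp fun i hi => mem_filter.2 ⟨mem_univ i, hi⟩
  have active_le : #{i | l.idxFun i = none} ≤ Fintype.card ι + 1 :=
    (card_le_univ _).trans (Nat.le_succ _)
  refine ⟨_, mem_Icc.2 ⟨active_pos, active_le⟩, ∑ i, (l.idxFun i).elim 0 (↑), c, fun x hx => ?_⟩
  exact (congrArg χ (sum_line_apply (↑) l ⟨x, hx⟩)).symm.trans (hc ⟨x, hx⟩)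

theorem exists_bound_mono_progression (κ : Type*) [Finite κ] (L : ℕ) :
    ∃ N > 0, ∀ χ : ℕ → κ, ∃ a, ∃ d ∈ Icc 1 N, ∀ i < L, χ (a + i * d) = χ a := by
  obtain ⟨N, hN, hmono⟩ := exists_bound_mono_homothetic_copy_s9 (range L) κ
  refine ⟨N, hN, fun χ => ?_⟩
  obtain ⟨d, hd, a, c, hc⟩ := hmono χ
  have color_eq : ∀ i < L, χ (a + i * d) = c := fun i hi => by
    rw [← hc i (mem_range.2 hi), smul_eq_mul, add_comm, mul_comm]
  have color_start (hL : 0 < L) : χ a = c := by simpa using color_eq 0 hL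
  exact ⟨a, d, hd, fun i hi => (color_eq i hi).trans (color_start (by lia)).symm⟩

lemma exists_forall_apply_notMem_of_card_mul_card_lt {ι α β : Type*} {f : ι → α → β}
    {J : Finset ι} {X : Finset α} {T : Finset β} (hf : ∀ j ∈ J, Set.InjOn (f j) X)
    (hcard : #J * #T < #X) : ∃ x ∈ X, ∀ j ∈ J, f j x ∉ T := by
  classical
  by_contra! hbad
  have cover : X ⊆ J.biUnion fun j => {x ∈ X | f j x ∈ T} := fun x hx => by
    obtain ⟨j, hj, hjx⟩ := hbad x hx
    exact mem_biUnion.2 ⟨j, hj, mem_filter.2 ⟨hx, hjx⟩⟩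
  have fiber_le : ∀ j ∈ J, #{x ∈ X | f j x ∈ T} ≤ #T := fun j hj =>
    card_le_card_of_injOn (f j) (fun x hx => (mem_filter.1 hx).2)
      ((hf j hj).mono (coe_subset.2 (filter_subset _ _)))
  exact hcard.not_ge <| (card_le_card cover).trans (card_biUnion_le_card_mul _ _ _ fiber_le)

lemma exists_forall_mul_mem_of_ncard_sdiff_lt {S : Set ℤ} {M n : ℕ}
    (h : M * (Set.Icc (1 : ℤ) n \ S).ncard < n / M) :
    ∃ x : ℤ, ∀ j ∈ Icc 1 M, (j : ℤ) * x ∈ S := by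
  have finite_gaps : (Set.Icc (1 : ℤ) n \ S).Finite := (Set.finite_Icc _ _).sdiff
  have mul_injective : ∀ j ∈ Icc 1 M, Function.Injective fun x : ℤ => (j : ℤ) * x := fun j hj =>
    mul_right_injective₀ (Nat.cast_ne_zero.2 (Nat.one_le_iff_ne_zero.1 (mem_Icc.1 hj).1))
  obtain ⟨x, hx, havoid⟩ := exists_forall_apply_notMem_of_card_mul_card_lt
    (X := Icc (1 : ℤ) (n / M : ℕ)) (T := finite_gaps.toFinset)
    (fun j hj => (mul_injective j hj).injOn)
    (by rwa [← Set.ncard_eq_toFinset_card _ finite_gaps, Nat.card_Icc, Int.card_Icc,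
      add_tsub_cancel_right, add_sub_cancel_right, Int.toNat_natCast])
  refine ⟨x, fun j hj => ?_⟩
  have mul_mem_Icc : (j : ℤ) * x ∈ Set.Icc (1 : ℤ) n := by
    rw [mem_Icc] at hj hx
    have hj_pos : (1 : ℤ) ≤ j := mod_cast hj.1
    have hj_le : (j : ℤ) ≤ M := mod_cast hj.2
    refine ⟨one_le_mul_of_one_le_of_one_le hj_pos hx.1, ?_⟩
    calc (j : ℤ) * x ≤ M * (n / M : ℕ) := mul_le_mul hj_le hx.2 (by lia) (by lia)
      _ ≤ n := mod_cast Nat.mul_div_le n M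
  by_contra hjx
  exact havoid j hj (finite_gaps.mem_toFinset.2 ⟨mul_mem_Icc, hjx⟩)

/-- The upper density `limsup |S ∩ {1, …, n}| / n` of a set of integers, which ignores its
nonpositive elements; `HasUpperDensityOne S` unfolds to `upperDensity S = 1`. -/
noncomputable def upperDensity (S : Set ℤ) : ℝ :=
  limsup (fun n : ℕ => ((S ∩ Set.Icc (1 : ℤ) n).ncard : ℝ) / n) atTop

lemma frequently_ncard_sdiff_lt_of_lt_upperDensity {S : Set ℤ} {ε : ℝ}
    (h : 1 - ε < upperDensity S) :
    ∃ᶠ n : ℕ in atTop, ((Set.Icc (1 : ℤ) n \ S).ncard : ℝ) < ε * n := by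
  have bounded_below : IsBoundedUnder (· ≥ ·) atTop
      fun n : ℕ => ((S ∩ Set.Icc (1 : ℤ) n).ncard : ℝ) / n :=
    isBoundedUnder_of ⟨0, fun n => by positivity⟩
  refine ((frequently_lt_of_lt_limsup bounded_below.isCoboundedUnder_le h).and_eventually
    (eventually_gt_atTop 0)).mono ?_
  rintro n ⟨hlt, hn⟩
  rw [lt_div_iff₀ (Nat.cast_pos.2 hn)] at hlt
  have ncard_add : ((S ∩ Set.Icc (1 : ℤ) n).ncard : ℝ) + (Set.Icc (1 : ℤ) n \ S).ncard = n := by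
    have := Set.ncard_inter_add_ncard_sdiff_eq_ncard (Set.Icc (1 : ℤ) n) S (Set.finite_Icc _ _)
    rw [Set.inter_comm, Set.ncard_eq_toFinset_card' (Set.Icc _ _), Set.toFinset_Icc,
      Int.card_Icc, add_sub_cancel_right, Int.toNat_natCast] at this
    exact_mod_cast this
  linarith

lemma exists_forall_mul_mem_of_lt_upperDensity {S : Set ℤ} {M : ℕ} (hM : 0 < M)
    (h : 1 - 1 / (2 * (M : ℝ) ^ 2) < upperDensity S) :
    ∃ x : ℤ, ∀ j ∈ Icc 1 M, (j : ℤ) * x ∈ S := by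
  obtain ⟨n, hlt, hn⟩ := ((frequently_ncard_sdiff_lt_of_lt_upperDensity h).and_eventually
    (eventually_ge_atTop (2 * M))).exists
  have gaps_lt : 2 * M ^ 2 * (Set.Icc (1 : ℤ) n \ S).ncard < n := by
    rw [one_div_mul_eq_div, lt_div_iff₀' (by positivity)] at hlt
    exact_mod_cast hlt
  have gaps_lt_quotient : M * (Set.Icc (1 : ℤ) n \ S).ncard < n / M := by
    rw [← Nat.succ_le_iff, Nat.le_div_iff_mul_le hM]
    nlinarith
  exact exists_forall_mul_mem_of_ncard_sdiff_lt gaps_lt_quotient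

theorem ladder_of_upper_density_one_general (κ : Type*) [Finite κ] (L : ℕ) :
    ∃ ε > 0, ∀ S : Set ℤ, 1 - ε < upperDensity S → ∀ χ : ℤ → κ,
      ∃ a : ℤ, ∃ d ∈ S, ∀ i < L, χ (a + (i : ℤ) * d) = χ a := by
  obtain ⟨N, hN, hmono⟩ := exists_bound_mono_progression κ L
  refine ⟨1 / (2 * (N : ℝ) ^ 2), by positivity, fun S hS χ => ?_⟩
  obtain ⟨x, hx⟩ := exists_forall_mul_mem_of_lt_upperDensity hN hS
  obtain ⟨a, j, hj, hcolor⟩ := hmono fun n => χ (n * x)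
  refine ⟨a * x, j * x, hx j hj, fun i hi => ?_⟩
  rw [← hcolor i hi]
  push_cast
  ring_nf

/-- Any set `S ⊆ ℤ⁺` with upper density 1 is a ladder. -/
theorem ladder_of_upper_density_one (S : Set ℤ) (hS : ∀ s ∈ S, 0 < s)
    (hdens : HasUpperDensityOne S) : IsLadder S := by
  intro k _ χ L
  obtain ⟨ε, hε, hladder⟩ := ladder_of_upper_density_one_general (Fin k) L
  exact hladder S ((sub_lt_self 1 hε).trans_eq hdens.symm) χ
end

section
/- Any set S ⊆ ℤ⁺ with upper density 1 is infinitely walkable, i.e., k-walkable for every k ≥ 1. -/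
/-- `S` is `k`-walkable: every coloring `χ : ℤ → Fin k` admits an infinite increasing
monochromatic sequence whose consecutive differences lie in `S`. -/
def IsKWalkable (S : Set ℤ) (k : ℕ) : Prop :=
  ∀ χ : ℤ → Fin k, ∃ a : ℕ → ℤ, StrictMono a ∧
    (∀ i : ℕ, a (i + 1) - a i ∈ S) ∧ ∀ i : ℕ, χ (a i) = χ (a 0)

/-!
A set of upper density one contains arbitrarily long intervals of positive integers: if each of the
consecutive blocks of length `L` missed a point of `S`, the density would be at most `1 - 1 / L`.
Given integers `x₀ < ⋯ < xₙ`, an interval in `S` longer than `xₙ - x₀` leaves room for some `xₙ₊₁`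
with all the differences `xₙ₊₁ - xᵢ` in `S`. The resulting sequence has *all* its differences
`xⱼ - xᵢ`, `i < j`, in `S`, so the same holds for its subsequences, and one of these is
monochromatic by the pigeonhole principle.
-/

open Filter Set Topology

/-- Thickness towards `+∞`: `S` contains arbitrarily long intervals of positive integers. The
interval of length `L` is written `{z + 1, …, z + L}` with `z ≥ 0`. -/
def IsThick (S : Set ℤ) : Prop :=
  ∀ L : ℕ, ∃ z : ℕ, Ioc (z : ℤ) (z + L) ⊆ S

section Density

variable {S : Set ℤ} {L : ℕ}

lemma div_le_ncard_Icc_sdiff (h : ∀ z : ℕ, ¬ Ioc (z : ℤ) (z + L) ⊆ S) (n : ℕ) :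
    n / L ≤ (Icc (1 : ℤ) n \ S).ncard := by
  have gap (z : ℕ) : ∃ y ∈ Ioc (z : ℤ) (z + L), y ∉ S := not_subset.mp (h z)
  choose g hg hgS using fun j : ℕ ↦ gap (j * L)
  have hg_mono : StrictMono g := strictMono_nat_of_lt_succ fun j ↦ by
    have hle := (hg j).2
    have hlt := (hg (j + 1)).1
    push_cast at hle hlt
    linarith
  refine le_ncard_of_inj_on_range g (fun j hj ↦ ⟨⟨?_, ?_⟩, hgS j⟩)
    (fun i _ j _ hij ↦ hg_mono.injective hij) ((finite_Icc _ _).subset sdiff_subset)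
  · exact Int.add_one_le_of_lt ((Int.natCast_nonneg _).trans_lt (hg j).1)
  · calc g j ≤ (j * L : ℕ) + L := (hg j).2
      _ = ((j + 1) * L : ℕ) := by push_cast; ring
      _ ≤ n := mod_cast (Nat.mul_le_mul_right L hj).trans (Nat.div_mul_le_self n L)

lemma ncard_inter_Icc_add_div_le (h : ∀ z : ℕ, ¬ Ioc (z : ℤ) (z + L) ⊆ S) (n : ℕ) :
    (S ∩ Icc (1 : ℤ) n).ncard + n / L ≤ n :=
  calc (S ∩ Icc (1 : ℤ) n).ncard + n / L
      ≤ (Icc (1 : ℤ) n ∩ S).ncard + (Icc (1 : ℤ) n \ S).ncard := by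
        rw [inter_comm]
        exact Nat.add_le_add_left (div_le_ncard_Icc_sdiff h n) _
    _ = (Icc (1 : ℤ) n).ncard := ncard_inter_add_ncard_sdiff_eq_ncard _ _ (finite_Icc _ _)
    _ = n := by simp [← Finset.coe_Icc, ncard_coe_finset]

lemma tendsto_natCast_div_div_atTop (L : ℕ) :
    Tendsto (fun n : ℕ ↦ ((n / L : ℕ) : ℝ) / n) atTop (𝓝 (L : ℝ)⁻¹) := by
  refine ((tendsto_nat_floor_mul_div_atTop (inv_nonneg.mpr L.cast_nonneg)).comp
    tendsto_natCast_atTop_atTop).congr fun n ↦ ?_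
  rw [Function.comp_apply, inv_mul_eq_div, Nat.floor_div_eq_div]

lemma limsup_ncard_inter_Icc_div_le (h : ∀ z : ℕ, ¬ Ioc (z : ℤ) (z + L) ⊆ S) :
    atTop.limsup (fun n : ℕ ↦ ((S ∩ Icc (1 : ℤ) n).ncard : ℝ) / n) ≤ 1 - (L : ℝ)⁻¹ := by
  have hlim : Tendsto (fun n : ℕ ↦ 1 - ((n / L : ℕ) : ℝ) / n) atTop (𝓝 (1 - (L : ℝ)⁻¹)) :=
    (tendsto_natCast_div_div_atTop L).const_sub 1
  rw [← hlim.limsup_eq]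
  refine limsup_le_limsup ?_ (isCoboundedUnder_le_of_le atTop (x := 0) fun n ↦ by positivity)
    hlim.isBoundedUnder_le
  filter_upwards [eventually_gt_atTop 0] with n hn
  have hn' : (0 : ℝ) < n := mod_cast hn
  rw [le_sub_iff_add_le, ← add_div, div_le_one hn']
  exact_mod_cast ncard_inter_Icc_add_div_le h n

lemma HasUpperDensityOne.isThick (hS : HasUpperDensityOne S) : IsThick S := by
  intro L
  by_contra! h
  have hL : 0 < L := Nat.pos_of_ne_zero fun hL ↦ h 0 (by simp [hL])
  have hle : (1 : ℝ) ≤ 1 - (L : ℝ)⁻¹ := hS.symm.trans_le (limsup_ncard_inter_Icc_div_le h)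
  have hpos : (0 : ℝ) < (L : ℝ)⁻¹ := by positivity
  linarith

end Density

section Sequences

variable {S : Set ℤ}

lemma IsThick.exists_forall_lt_and_sub_mem (hS : IsThick S) (F : Finset ℤ) :
    ∃ y, ∀ x ∈ F, x < y ∧ y - x ∈ S := by
  obtain ⟨b, hb⟩ := F.bddAbove
  obtain ⟨a, ha⟩ := F.bddBelow
  obtain ⟨z, hz⟩ := hS (b + 1 - a).toNat
  refine ⟨z + b + 1, fun x hx ↦ ?_⟩
  have hxb : x ≤ b := hb hx
  have hax : a ≤ x := ha hx
  exact ⟨by omega, hz ⟨by omega, by omega⟩⟩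

lemma IsThick.exists_strictMono_sub_mem (hS : IsThick S) :
    ∃ x : ℕ → ℤ, StrictMono x ∧ ∀ i j, i < j → x j - x i ∈ S := by
  obtain ⟨x, -, hx⟩ := exists_seq_of_forall_finset_exists (fun _ : ℤ ↦ True)
    (fun x y ↦ x < y ∧ y - x ∈ S) fun F _ ↦ by simpa using hS.exists_forall_lt_and_sub_mem F
  exact ⟨x, fun i j hij ↦ (hx i j hij).1, fun i j hij ↦ (hx i j hij).2⟩

lemma exists_strictMono_forall_eq {κ : Type*} [Finite κ] (f : ℕ → κ) :
    ∃ φ : ℕ → ℕ, StrictMono φ ∧ ∃ c, ∀ n, f (φ n) = c := by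
  obtain ⟨c, hc⟩ := Finite.exists_infinite_fiber f
  have hc' : {n | f n = c}.Infinite := infinite_coe_iff.mp hc
  exact ⟨Nat.nth (f · = c), Nat.nth_strictMono hc', c, Nat.nth_mem_of_infinite hc'⟩

lemma IsThick.exists_monochromatic {κ : Type*} [Finite κ] (hS : IsThick S) (χ : ℤ → κ) :
    ∃ a : ℕ → ℤ, StrictMono a ∧ (∀ i j, i < j → a j - a i ∈ S) ∧ ∀ i, χ (a i) = χ (a 0) := by
  obtain ⟨x, hx_mono, hx_sub⟩ := hS.exists_strictMono_sub_mem
  obtain ⟨φ, hφ, c, hc⟩ := exists_strictMono_forall_eq (χ ∘ x)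
  exact ⟨x ∘ φ, hx_mono.comp hφ, fun i j hij ↦ hx_sub _ _ (hφ hij),
    fun i ↦ (hc i).trans (hc 0).symm⟩

end Sequences

theorem infinitely_walkable_of_upper_density_one_general {S : Set ℤ} (hdens : HasUpperDensityOne S)
    {κ : Type*} [Finite κ] (χ : ℤ → κ) :
    ∃ a : ℕ → ℤ, StrictMono a ∧ (∀ i j, i < j → a j - a i ∈ S) ∧ ∀ i, χ (a i) = χ (a 0) :=
  hdens.isThick.exists_monochromatic χ

/-- Any set `S ⊆ ℤ⁺` with upper density 1 is infinitely walkable. -/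
theorem infinitely_walkable_of_upper_density_one (S : Set ℤ) (hS : ∀ s ∈ S, 0 < s)
    (hdens : HasUpperDensityOne S) : ∀ k : ℕ, 1 ≤ k → IsKWalkable S k := by
  intro k _ χ
  obtain ⟨a, ha, hsub, hχ⟩ := infinitely_walkable_of_upper_density_one_general hdens χ
  exact ⟨a, ha, fun i ↦ hsub i (i + 1) i.lt_succ_self, hχ⟩
end

section
/- Let G be a directed graph with no loops, given by an irreflexive edge relation r : V → V → Prop. Then G has infinite chromatic number if and only if G is accessible. -/
/-- A directed graph with edge relation `r` has *infinite chromatic number* if every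
finite coloring has a monochromatic edge. -/
def InfChromatic {V : Type*} (r : V → V → Prop) : Prop :=
  ∀ k : ℕ, 1 ≤ k → ∀ c : V → Fin k, ∃ u v : V, r u v ∧ c u = c v

/-- A directed graph with edge relation `r` is *accessible* if every finite coloring
admits arbitrarily long monochromatic directed paths. -/
def Accessible {V : Type*} (r : V → V → Prop) : Prop :=
  ∀ k : ℕ, 1 ≤ k → ∀ c : V → Fin k, ∀ n : ℕ,
    ∃ v : ℕ → V, (∀ i : ℕ, i < n → r (v i) (v (i + 1))) ∧
      ∀ i : ℕ, i ≤ n → c (v i) = c (v 0)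

/-!
If the monochromatic edges of a finite coloring `c` contain no walk of length `n`, then labelling
each vertex by the length of the longest such walk leaving it uses only `n` labels, and the label
strictly drops along every monochromatic edge. Pairing `c` with this label therefore gives a finite
coloring without monochromatic edges. This is the easy half of the Gallai–Roy theorem, applied to
each color class.
-/

section Walks

variable {V α : Type*} {r : V → V → Prop} {c : V → α} {w : ℕ → V} {n : ℕ}

/-- `w 0, …, w n` is a directed walk of length `n` along edges of `r`; the values of `w` beyond
index `n` are irrelevant. -/
def IsWalk (r : V → V → Prop) (n : ℕ) (w : ℕ → V) : Prop :=
  ∀ i < n, r (w i) (w (i + 1))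

/-- The edges of `r` whose two ends have the same color under `c`, as a directed graph. -/
def MonochromaticEdge (r : V → V → Prop) (c : V → α) (u v : V) : Prop :=
  r u v ∧ c u = c v

theorem IsWalk.cons {u : V} (hw : IsWalk r n w) (hu : r u (w 0)) :
    IsWalk r (n + 1) (fun i => Nat.casesOn i u w)
  | 0, _ => hu
  | i + 1, hi => hw i (Nat.lt_of_succ_lt_succ hi)

theorem IsWalk.color_eq (hw : IsWalk (MonochromaticEdge r c) n w) :
    ∀ i ≤ n, c (w i) = c (w 0)
  | 0, _ => rfl
  | i + 1, hi => (hw i hi).2.symm.trans (hw.color_eq i (Nat.le_of_succ_le hi))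

theorem exists_fin_labelling_lt_of_forall_not_isWalk (hr : ∀ w, ¬ IsWalk r n w) :
    ∃ f : V → Fin n, ∀ ⦃u v⦄, r u v → f v < f u := by
  classical
  let HasWalk (v : V) (m : ℕ) : Prop := ∃ w, w 0 = v ∧ IsWalk r m w
  let longest (v : V) : ℕ := Nat.findGreatest (HasWalk v) n
  have hasWalk_zero (v : V) : HasWalk v 0 :=
    ⟨fun _ => v, rfl, fun _ hi => (Nat.not_lt_zero _ hi).elim⟩
  have hasWalk_longest (v : V) : HasWalk v (longest v) :=
    Nat.findGreatest_spec n.zero_le (hasWalk_zero v)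
  have longest_lt (v : V) : longest v < n := by
    refine (Nat.findGreatest_le n).lt_of_ne fun h => ?_
    obtain ⟨w, -, hw⟩ := hasWalk_longest v
    exact hr w (h ▸ hw)
  refine ⟨fun v => ⟨longest v, longest_lt v⟩, fun u v huv => ?_⟩
  obtain ⟨w, rfl, hw⟩ := hasWalk_longest v
  exact Nat.le_findGreatest (longest_lt (w 0)) ⟨_, rfl, hw.cons huv⟩

end Walks

section Colorings

variable {V : Type*} {r : V → V → Prop}

theorem InfChromatic.exists_monochromaticEdge {α : Type*} [Finite α] (h : InfChromatic r)
    (c : V → α) : ∃ u v, MonochromaticEdge r c u v := by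
  obtain ⟨k, ⟨e⟩⟩ := Finite.exists_equiv_fin α
  -- The spare color makes the palette nonempty even when `α` is empty.
  obtain ⟨u, v, huv, hc⟩ := h (k + 1) k.succ_pos fun x => (e (c x)).castSucc
  exact ⟨u, v, huv, e.injective (Fin.castSucc_injective k hc)⟩

theorem InfChromatic.exists_isWalk_monochromaticEdge {α : Type*} [Finite α] (h : InfChromatic r)
    (c : V → α) (n : ℕ) : ∃ w, IsWalk (MonochromaticEdge r c) n w := by
  by_contra! hno
  obtain ⟨f, hf⟩ := exists_fin_labelling_lt_of_forall_not_isWalk hno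
  obtain ⟨u, v, huv, hcf⟩ := h.exists_monochromaticEdge fun x => (c x, f x)
  obtain ⟨hc, hf_eq⟩ := Prod.mk.inj hcf
  exact (hf ⟨huv, hc⟩).ne' hf_eq

theorem InfChromatic.accessible (h : InfChromatic r) : Accessible r := by
  intro k _ c n
  obtain ⟨w, hw⟩ := h.exists_isWalk_monochromaticEdge c n
  exact ⟨w, fun i hi => (hw i hi).1, hw.color_eq⟩

theorem Accessible.infChromatic (h : Accessible r) : InfChromatic r := by
  intro k hk c
  obtain ⟨w, hw, hc⟩ := h k hk c 1
  exact ⟨w 0, w 1, hw 0 one_pos, (hc 1 le_rfl).symm⟩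

end Colorings

theorem loopless_infChromatic_iff_accessible_general {V : Type*} (r : V → V → Prop) :
    InfChromatic r ↔ Accessible r :=
  ⟨InfChromatic.accessible, Accessible.infChromatic⟩

/-- A loopless directed graph has infinite chromatic number iff it is accessible. -/
theorem loopless_infChromatic_iff_accessible {V : Type*} (r : V → V → Prop)
    (hloopless : ∀ v : V, ¬ r v v) : InfChromatic r ↔ Accessible r :=
  loopless_infChromatic_iff_accessible_general r
end
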